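/- (Mehler's formula for the bivariate Poisson distribution.) Let μ₁, μ₂ > 0 and 0 ≤ μ₃ < min(μ₁, μ₂). Then for every (x, y) ∈ ℕ², p(x, y; μ₁, μ₂, μ₃) = ∑_{k=0}^∞ (μ₃^k / k!) (D_-^k p(·; μ₁))(x) (D_-^k p(·; μ₂))(y) = p(x; μ₁) p(y; μ₂) ∑_{k=0}^∞ ((μ₃/(μ₁ μ₂))^k / k!) P_k(x; μ₁) P_k(y; μ₂), where both series converge absolutely and D_- is the backward difference operator acting by (D_- g)(x) = g(x) − g(x−1) for x ≥ 1 and (D_- g)(0) = g(0). -/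

import Mathlib

/-!
Write `s = μ₃ / (μ₁ μ₂)` and let `G x y = ∑ₖ sᵏ / k! · Pₖ(x; μ₁) Pₖ(y; μ₂)`. The Charlier
polynomials satisfy the raising relation `Pₖ₊₁(x) = x Pₖ(x - 1) - μ Pₖ(x)` and the lowering
relation `Pₖ₊₁(x + 1) - Pₖ₊₁(x) = (k + 1) Pₖ(x)`. Applying the lowering relation in `y` and then
the raising relation in `x` gives
`G x (y + 1) = (1 - s μ₁) G x y + s x G (x - 1) y`,
while `G (x + 1) 0 = (1 - s μ₂) G x 0` and `G 0 0 = exp (s μ₁ μ₂)`. These relations determine `G`: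
it equals `exp (s μ₁ μ₂)` times the finite sum `mehlerKernel`, which obeys the same recursion by
Pascal's rule. The recursion acts termwise on the series, so convergence comes out of the same
induction. By a direct computation, the bivariate probability divided by the product of its
marginals is `exp μ₃` times that finite sum, which is the second form of the formula. The first
form follows because the raising relation gives
`D₋ᵏ p(·; μ) = (-1 / μ)ᵏ Pₖ(·; μ) p(·; μ)`.
-/

open scoped BigOperators
open MeasureTheory Filter Topology

/-- Charlier polynomial `P_k(x; μ)`. -/
noncomputable def charlier (μ : ℝ) (k x : ℕ) : ℝ :=
  ∑ j ∈ Finset.range (k + 1),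
    (k.choose j : ℝ) * (-μ) ^ (k - j) * (x.descFactorial j : ℝ)

/-- Poisson probability mass function `p(x; μ)`. -/
noncomputable def poissonPMF (μ : ℝ) (x : ℕ) : ℝ :=
  Real.exp (-μ) * μ ^ x / (x.factorial : ℝ)

/-- Backward difference operator `D₋`. -/
def Dminus (g : ℕ → ℝ) : ℕ → ℝ :=
  fun x => g x - if x = 0 then 0 else g (x - 1)

/-- Forward difference operator `D₊`. -/
def Dplus (g : ℕ → ℝ) : ℕ → ℝ :=
  fun x => g (x + 1) - g x

/-- Bivariate Poisson probability mass function `p(x, y; μ₁, μ₂, μ₃)`. -/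
noncomputable def poissonPMF₂ (μ₁ μ₂ μ₃ : ℝ) (x y : ℕ) : ℝ :=
  ∑ j ∈ Finset.range (min x y + 1),
    poissonPMF (μ₁ - μ₃) (x - j) * poissonPMF (μ₂ - μ₃) (y - j) * poissonPMF μ₃ j

/-- Charlier coefficient `c_G(k; μ)`. -/
noncomputable def charlierCoeff (μ : ℝ) (G : ℕ → ℝ) (k : ℕ) : ℝ :=
  (μ ^ k)⁻¹ * ∑' x : ℕ, poissonPMF μ x * G x * charlier μ k x

/-! ### Recurrences for Charlier polynomials -/

lemma charlier_zero_right (μ : ℝ) (k : ℕ) : charlier μ k 0 = (-μ) ^ k := by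
  unfold charlier
  rw [Finset.sum_range_succ']
  simp

lemma charlier_zero_left (μ : ℝ) (x : ℕ) : charlier μ 0 x = 1 := by
  simp [charlier]

/-- `(x)ⱼ₊₁ = x (x - 1)ⱼ`; the truncated subtraction at `x = 0` is harmless because of the
factor `x`. -/
lemma descFactorial_succ_eq (x j : ℕ) :
    (x.descFactorial (j + 1) : ℝ) = x * ((x - 1).descFactorial j : ℝ) := by
  cases x with
  | zero => simp
  | succ x => rw [Nat.succ_descFactorial_succ]; simp

/-- Raising relation for the Charlier polynomials, from Pascal's rule in the degree. -/
lemma charlier_succ_left (μ : ℝ) (k x : ℕ) :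
    charlier μ (k + 1) x = x * charlier μ k (x - 1) - μ * charlier μ k x := by
  unfold charlier
  have h2 : μ * ∑ j ∈ Finset.range (k + 1),
      (k.choose j : ℝ) * (-μ) ^ (k - j) * (x.descFactorial j : ℝ)
      = - ∑ j ∈ Finset.range (k + 2),
        (k.choose j : ℝ) * (-μ) ^ (k + 1 - j) * (x.descFactorial j : ℝ) := by
    rw [Finset.sum_range_succ _ (k + 1), Nat.choose_succ_self, Finset.mul_sum,
      ← neg_eq_iff_eq_neg, ← Finset.sum_neg_distrib]
    simp only [Nat.cast_zero, zero_mul, add_zero]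
    refine Finset.sum_congr rfl fun j hj => ?_
    rw [Nat.succ_sub (Nat.lt_succ_iff.mp (Finset.mem_range.mp hj)), pow_succ]
    ring
  rw [h2, sub_neg_eq_add, Finset.sum_range_succ' _ (k + 1), Finset.sum_range_succ' _ (k + 1),
    Finset.mul_sum, ← add_assoc, ← Finset.sum_add_distrib]
  congr 1
  · refine Finset.sum_congr rfl fun j _ => ?_
    rw [Nat.choose_succ_succ, Nat.add_sub_add_right, descFactorial_succ_eq]
    push_cast
    ring
  · simp

/-- Lowering relation for the Charlier polynomials, from
`(x + 1)ⱼ₊₁ = (x)ⱼ₊₁ + (j + 1) (x)ⱼ`. -/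
lemma charlier_succ_succ (μ : ℝ) (k x : ℕ) :
    charlier μ (k + 1) (x + 1) = charlier μ (k + 1) x + (k + 1) * charlier μ k x := by
  unfold charlier
  rw [Finset.sum_range_succ' _ (k + 1), Finset.sum_range_succ' _ (k + 1), Finset.mul_sum,
    add_right_comm, ← Finset.sum_add_distrib]
  congr 1
  refine Finset.sum_congr rfl fun j _ => ?_
  have h1 : ((x + 1).descFactorial (j + 1) : ℝ)
      = x.descFactorial (j + 1) + (j + 1) * x.descFactorial j := by
    rw [Nat.succ_descFactorial_succ, Nat.descFactorial_succ]
    push_cast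
    rcases le_or_gt j x with h | h
    · rw [Nat.cast_sub h]; ring
    · simp [Nat.descFactorial_eq_zero_iff_lt.mpr h]
  have h2 : ((k : ℝ) + 1) * k.choose j = (k + 1).choose (j + 1) * (j + 1) := by
    exact_mod_cast Nat.add_one_mul_choose_eq k j
  rw [h1, Nat.add_sub_add_right]
  linear_combination (-((-μ) ^ (k - j) * (x.descFactorial j : ℝ))) * h2

/-! ### Iterated differences of the Poisson mass function -/

lemma iterate_Dminus_poissonPMF {μ : ℝ} (hμ : μ ≠ 0) (k x : ℕ) :
    (Dminus^[k] (poissonPMF μ)) x = (-1 / μ) ^ k * charlier μ k x * poissonPMF μ x := by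
  induction k generalizing x with
  | zero => simp [charlier_zero_left]
  | succ k ih =>
    rw [Function.iterate_succ_apply', Dminus, charlier_succ_left, pow_succ]
    cases x with
    | zero =>
      simp only [if_true, ih]
      field_simp
      simp
      ring
    | succ x =>
      have hp : poissonPMF μ x = (x + 1) / μ * poissonPMF μ (x + 1) := by
        have : (x.factorial : ℝ) ≠ 0 := by positivity
        have : (x : ℝ) + 1 ≠ 0 := by positivity
        unfold poissonPMF
        rw [Nat.factorial_succ, pow_succ]
        push_cast
        field_simp
      simp only [Nat.add_sub_cancel, ih, Nat.succ_ne_zero, if_false, hp]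
      push_cast
      field_simp
      ring

/-! ### The Mehler kernel -/

/-- The finite sum `∑ⱼ (x)ⱼ C(y, j) (1 - s m)ˣ⁻ʲ (1 - s l)ʸ⁻ʲ sʲ`, which is, up to an exponential
factor, the closed form of the Mehler series. Terms with `x < j` vanish because `(x)ⱼ = 0`, so
the truncated exponent `x - j` does not matter. -/
noncomputable def mehlerKernel (s l m : ℝ) (x y : ℕ) : ℝ :=
  ∑ j ∈ Finset.range (y + 1), (x.descFactorial j : ℝ) * (y.choose j : ℝ)
    * (1 - s * m) ^ (x - j) * (1 - s * l) ^ (y - j) * s ^ j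

lemma mehlerKernel_zero_right (s l m : ℝ) (x : ℕ) :
    mehlerKernel s l m x 0 = (1 - s * m) ^ x := by
  simp [mehlerKernel]

lemma mehlerKernel_succ_right (s l m : ℝ) (x y : ℕ) :
    mehlerKernel s l m x (y + 1)
      = (1 - s * l) * mehlerKernel s l m x y + s * x * mehlerKernel s l m (x - 1) y := by
  unfold mehlerKernel
  have h2 : (1 - s * l) * ∑ j ∈ Finset.range (y + 1),
      (x.descFactorial j : ℝ) * (y.choose j : ℝ)
        * (1 - s * m) ^ (x - j) * (1 - s * l) ^ (y - j) * s ^ j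
      = ∑ j ∈ Finset.range (y + 2), (x.descFactorial j : ℝ) * (y.choose j : ℝ)
        * (1 - s * m) ^ (x - j) * (1 - s * l) ^ (y + 1 - j) * s ^ j := by
    rw [Finset.sum_range_succ _ (y + 1), Nat.choose_succ_self, Finset.mul_sum]
    simp only [Nat.cast_zero, zero_mul, mul_zero, add_zero]
    refine Finset.sum_congr rfl fun j hj => ?_
    rw [Nat.succ_sub (Nat.lt_succ_iff.mp (Finset.mem_range.mp hj)), pow_succ]
    ring
  rw [h2, Finset.sum_range_succ' _ (y + 1), Finset.sum_range_succ' _ (y + 1),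
    Finset.mul_sum, add_right_comm, ← Finset.sum_add_distrib]
  congr 1
  · refine Finset.sum_congr rfl fun j _ => ?_
    rw [Nat.choose_succ_succ, Nat.add_sub_add_right, descFactorial_succ_eq,
      Nat.sub_sub, Nat.add_comm 1 j, pow_succ s j]
    push_cast
    ring
  · simp

/-! ### Summing the Mehler series -/

/-- Termwise form of the recursion: if `f` and `g` agree at `0` and `f` exceeds `g` by a
shifted series `h`, the sums add up. -/
lemma hasSum_of_shift {f g h : ℕ → ℝ} {a b : ℝ} (hg : HasSum g a) (hh : HasSum h b)
    (h0 : f 0 = g 0) (hs : ∀ k, f (k + 1) = g (k + 1) + h k) : HasSum f (a + b) := by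
  have h1 : HasSum (fun k => g (k + 1)) (a - g 0) := by
    rw [hasSum_nat_add_iff 1]
    simpa using hg
  have h2 : HasSum (fun k => f (k + 1)) (a - g 0 + b) := by
    simpa only [hs] using h1.add hh
  rw [hasSum_nat_add_iff 1] at h2
  have e : a - g 0 + b + ∑ i ∈ Finset.range 1, f i = a + b := by
    rw [Finset.sum_range_one, h0]
    ring
  rwa [e] at h2

lemma factorial_succ_div (s : ℝ) (k : ℕ) :
    s ^ (k + 1) / ((k + 1).factorial : ℝ) * (k + 1) = s * (s ^ k / (k.factorial : ℝ)) := by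
  have : (k.factorial : ℝ) ≠ 0 := by positivity
  have : (k : ℝ) + 1 ≠ 0 := by positivity
  rw [Nat.factorial_succ, pow_succ]
  push_cast
  field_simp

/-- Closed form of the Mehler series for the Charlier polynomials, for arbitrary real
parameters. -/
lemma hasSum_charlier_mul (s l m : ℝ) (x y : ℕ) :
    HasSum (fun k : ℕ => s ^ k / (k.factorial : ℝ) * charlier l k x * charlier m k y)
      (Real.exp (s * l * m) * mehlerKernel s l m x y) := by
  induction y generalizing x with
  | zero =>
    induction x with
    | zero =>
      simp only [charlier_zero_right, mehlerKernel_zero_right, pow_zero, mul_one]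
      rw [Real.exp_eq_exp_ℝ]
      have hf : (fun k : ℕ => s ^ k / (k.factorial : ℝ) * (-l) ^ k * (-m) ^ k)
          = fun k : ℕ => (s * l * m) ^ k / (k.factorial : ℝ) := by
        funext k
        rw [div_mul_eq_mul_div, div_mul_eq_mul_div, ← mul_pow, ← mul_pow]
        congr 2
        ring
      rw [hf]
      exact NormedSpace.expSeries_div_hasSum_exp (s * l * m)
    | succ x ih =>
      have key := hasSum_of_shift (f := fun k : ℕ =>
        s ^ k / (k.factorial : ℝ) * charlier l k (x + 1) * charlier m k 0)
        ih (ih.mul_left (-(s * m))) (by simp [charlier_zero_left]) ?_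
      · convert key using 1
        rw [mehlerKernel_zero_right, mehlerKernel_zero_right, pow_succ]
        ring
      · intro k
        simp only [charlier_succ_succ, charlier_zero_right, pow_succ (-m)]
        linear_combination (-(charlier l k x * (-m) ^ k * m)) * factorial_succ_div s k
  | succ y ih =>
    have key := hasSum_of_shift (f := fun k : ℕ =>
        s ^ k / (k.factorial : ℝ) * charlier l k x * charlier m k (y + 1))
        (ih x) (((ih (x - 1)).mul_left (s * x)).sub ((ih x).mul_left (s * l)))
        (by simp [charlier_zero_left]) ?_
    · convert key using 1
      rw [mehlerKernel_succ_right]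
      ring
    · intro k
      -- Lowering in `y` leaves a shifted correction term, which is then raised in `x`.
      simp only [charlier_succ_succ m]
      have h := charlier_succ_left l k x
      linear_combination (charlier l (k + 1) x * charlier m k y) * factorial_succ_div s k
        + (s * (s ^ k / (k.factorial : ℝ)) * charlier m k y) * h

/-! ### The bivariate Poisson mass function and Mehler's formula -/

lemma poissonPMF₂_eq {μ₁ μ₂ : ℝ} (μ₃ : ℝ) (h₁ : μ₁ ≠ 0) (h₂ : μ₂ ≠ 0) (x y : ℕ) :
    poissonPMF₂ μ₁ μ₂ μ₃ x y = poissonPMF μ₁ x * poissonPMF μ₂ y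
      * (Real.exp μ₃ * mehlerKernel (μ₃ / (μ₁ * μ₂)) μ₁ μ₂ x y) := by
  have hsub : Finset.range (min x y + 1) ⊆ Finset.range (y + 1) := by
    intro j; simp only [Finset.mem_range]; omega
  rw [mehlerKernel, ← Finset.sum_subset hsub, poissonPMF₂, Finset.mul_sum, Finset.mul_sum]
  · refine Finset.sum_congr rfl fun j hj => ?_
    have hj' : j ≤ x ∧ j ≤ y := by rw [Finset.mem_range] at hj; omega
    obtain ⟨u, rfl⟩ := Nat.exists_eq_add_of_le hj'.1
    obtain ⟨v, rfl⟩ := Nat.exists_eq_add_of_le hj'.2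
    have hd : ((j + u).descFactorial j : ℝ) = (j + u).factorial / u.factorial := by
      rw [eq_div_iff (by positivity), mul_comm]
      have := Nat.factorial_mul_descFactorial (Nat.le_add_right j u)
      rw [Nat.add_sub_cancel_left] at this
      exact_mod_cast this
    have hc : ((j + v).choose j : ℝ) = (j + v).factorial / (j.factorial * v.factorial) := by
      rw [Nat.cast_choose ℝ (Nat.le_add_right j v), Nat.add_sub_cancel_left]
    have ha : 1 - μ₃ / (μ₁ * μ₂) * μ₂ = (μ₁ - μ₃) / μ₁ := by field_simp
    have hb : 1 - μ₃ / (μ₁ * μ₂) * μ₁ = (μ₂ - μ₃) / μ₂ := by field_simp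
    have he : Real.exp (-(μ₁ - μ₃)) * Real.exp (-(μ₂ - μ₃)) * Real.exp (-μ₃)
        = Real.exp (-μ₁) * Real.exp (-μ₂) * Real.exp μ₃ := by
      simp only [← Real.exp_add]; congr 1; ring
    have := Nat.cast_ne_zero (R := ℝ).mpr (j + u).factorial_ne_zero
    have := Nat.cast_ne_zero (R := ℝ).mpr (j + v).factorial_ne_zero
    have hpow : μ₁ ^ (j + u) * μ₂ ^ (j + v) * (((μ₁ - μ₃) / μ₁) ^ u * ((μ₂ - μ₃) / μ₂) ^ v
        * (μ₃ / (μ₁ * μ₂)) ^ j) = (μ₁ - μ₃) ^ u * (μ₂ - μ₃) ^ v * μ₃ ^ j := by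
      simp only [div_pow, mul_pow, pow_add]
      field_simp
    simp only [poissonPMF, Nat.add_sub_cancel_left, hd, hc, ha, hb]
    calc _ = (Real.exp (-(μ₁ - μ₃)) * Real.exp (-(μ₂ - μ₃)) * Real.exp (-μ₃))
          * ((μ₁ - μ₃) ^ u * (μ₂ - μ₃) ^ v * μ₃ ^ j)
          / (u.factorial * v.factorial * j.factorial) := by field_simp
      _ = _ := by
        rw [he, ← hpow]
        field_simp
  · intro j hj hj'
    rw [Finset.mem_range] at hj hj'
    have : x < j := by omega
    simp [Nat.descFactorial_eq_zero_iff_lt.mpr this]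

/-- Mehler's formula for the bivariate Poisson distribution. -/
theorem poisson_mehler_formula (μ₁ μ₂ μ₃ : ℝ) (h₁ : 0 < μ₁) (h₂ : 0 < μ₂)
    (h₃ : 0 ≤ μ₃) (h₃' : μ₃ < min μ₁ μ₂) (x y : ℕ) :
    Summable (fun k : ℕ =>
      μ₃ ^ k / (k.factorial : ℝ) * (Dminus^[k] (poissonPMF μ₁)) x
        * (Dminus^[k] (poissonPMF μ₂)) y) ∧
    Summable (fun k : ℕ =>
      (μ₃ / (μ₁ * μ₂)) ^ k / (k.factorial : ℝ) * charlier μ₁ k x * charlier μ₂ k y) ∧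
    (poissonPMF₂ μ₁ μ₂ μ₃ x y
      = ∑' k : ℕ, μ₃ ^ k / (k.factorial : ℝ) * (Dminus^[k] (poissonPMF μ₁)) x
          * (Dminus^[k] (poissonPMF μ₂)) y) ∧
    (poissonPMF₂ μ₁ μ₂ μ₃ x y
      = poissonPMF μ₁ x * poissonPMF μ₂ y
        * ∑' k : ℕ, (μ₃ / (μ₁ * μ₂)) ^ k / (k.factorial : ℝ)
            * charlier μ₁ k x * charlier μ₂ k y) := by
  have h₁' := h₁.ne'
  have h₂' := h₂.ne'
  have hS := hasSum_charlier_mul (μ₃ / (μ₁ * μ₂)) μ₁ μ₂ x y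
  rw [show μ₃ / (μ₁ * μ₂) * μ₁ * μ₂ = μ₃ by field_simp] at hS
  have hD : (fun k : ℕ => μ₃ ^ k / (k.factorial : ℝ) * (Dminus^[k] (poissonPMF μ₁)) x
        * (Dminus^[k] (poissonPMF μ₂)) y)
      = fun k : ℕ => poissonPMF μ₁ x * poissonPMF μ₂ y *
        ((μ₃ / (μ₁ * μ₂)) ^ k / (k.factorial : ℝ) * charlier μ₁ k x * charlier μ₂ k y) := by
    funext k
    have hk : (μ₃ / (μ₁ * μ₂)) ^ k = μ₃ ^ k * (-1 / μ₁) ^ k * (-1 / μ₂) ^ k := by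
      rw [← mul_pow, ← mul_pow]
      congr 1
      field_simp
    rw [iterate_Dminus_poissonPMF h₁', iterate_Dminus_poissonPMF h₂', hk]
    ring
  have hp := poissonPMF₂_eq μ₃ h₁' h₂' x y
  refine ⟨?_, hS.summable, ?_, ?_⟩
  · rw [hD]
    exact hS.summable.mul_left _
  · rw [hD, (hS.mul_left _).tsum_eq, hp]
  · rw [hS.tsum_eq, hp]
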